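/- (Theorem 4.1(iii), first case.) Uniformly over all λ ∈ C⁺ with α_λ ≤ β_λ and all X ∈ a with x2 ≥ x3 ≥ x1, one has E_k(X,λ) ≍ e^{⟨λ,X⁺⟩} / [ (1+α_λ α_{X⁺})^{k+1} (1+β_λ β_{X⁺})^{k+1} (1+γ_λ γ_{X⁺})^{k} ]. -/

import Mathlib

open Real MeasureTheory

/-- The rank-one Dunkl kernel `E_k^{rk1}(x,v)`. -/
noncomputable def Erk1 (k x v : ℝ) : ℝ :=
  (Real.Gamma (k + 1/2) / (Real.sqrt Real.pi * Real.Gamma k)) *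
    ∫ z in (-1 : ℝ)..1, Real.exp (z * x * v) * (1 - z) ^ (k - 1) * (1 + z) ^ k

/-- The normalized modified Bessel function `𝒥_a(y)`, for `a > -1/2`. -/
noncomputable def besselJ (a y : ℝ) : ℝ :=
  (Real.Gamma (a + 1) / (Real.sqrt Real.pi * Real.Gamma (a + 1/2))) *
    ∫ z in (-1 : ℝ)..1, Real.exp (y * z) * (1 - z ^ 2) ^ (a - 1/2)

/-- `W_k(λ,ν)`. -/
noncomputable def Wk (k l1 l2 l3 n1 n2 : ℝ) : ℝ :=
  ((l1 - n1) * (l1 - n2) * (n1 - l2) * (l2 - n2) * (n1 - l3) * (n2 - l3)) ^ (k - 1)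

/-- `V(λ) = (λ1-λ2)(λ1-λ3)(λ2-λ3)`. -/
def Vlam (l1 l2 l3 : ℝ) : ℝ := (l1 - l2) * (l1 - l3) * (l2 - l3)

/-- The `A₂` Dunkl kernel `E_k(X,λ)`, defined via the rank-one kernel formula. -/
noncomputable def EkA2 (k x1 x2 x3 l1 l2 l3 : ℝ) : ℝ :=
  (3 * Real.Gamma (3 * k) / (Vlam l1 l2 l3 ^ (2 * k) * Real.Gamma k ^ 2)) *
    ∫ n2 in l3..l2, ∫ n1 in l2..l1,
      ((n1 - l2) * (l1 - n2) * Erk1 k ((x1 - x2) / 2) (n1 - n2)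
        + (l1 - n1) * (l2 - n2) * Erk1 k (-(x1 - x2) / 2) (n1 - n2))
      * ((n1 - l3) * (n2 - l3)) * Real.exp ((x1 + x2 - 2 * x3) * (n1 + n2) / 2)
      * Wk k l1 l2 l3 n1 n2

/-- one-dimensional model integral -/
noncomputable def FB (A B y : ℝ) : ℝ :=
  ∫ t in Set.Ioo (0:ℝ) 1, Real.exp (-y * t) * t ^ A * (1 - t) ^ B

lemma aux_exp_rpow (m : ℝ) (hm : 0 < m) :
    ∃ C : ℝ, 0 < C ∧ ∀ x : ℝ, 0 ≤ x → (1 + x) ^ m * Real.exp (-x) ≤ C * Real.exp (-(x/2)) := by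
  refine ⟨(1 + 2*m) ^ m, by positivity, fun x hx => ?_⟩
  have h1 : 1 + x ≤ (1 + 2*m) * Real.exp (x / (2*m)) := by
    have h2 := Real.add_one_le_exp (x / (2*m))
    have h3 : 1 + x ≤ (1 + 2*m) * (x / (2*m) + 1) := by
      have : (1 + 2*m) * (x / (2*m) + 1) = 1 + x + (2*m + x/(2*m)) := by
        field_simp; ring
      rw [this]
      have : 0 ≤ x/(2*m) := by positivity
      linarith
    refine h3.trans ?_
    gcongr
  have h4 : (1 + x) ^ m ≤ (1 + 2*m)^m * Real.exp (x/2) := by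
    calc (1 + x) ^ m ≤ ((1 + 2*m) * Real.exp (x / (2*m))) ^ m := by gcongr
      _ = _ := by
        rw [Real.mul_rpow (by positivity) (by positivity), ← Real.exp_mul]
        congr 2; field_simp
  calc (1 + x) ^ m * Real.exp (-x) ≤ ((1 + 2*m)^m * Real.exp (x/2)) * Real.exp (-x) := by gcongr
    _ = _ := by rw [mul_assoc, ← Real.exp_add]; congr 2; ring

lemma beta_integrableOn {A B : ℝ} (hA : -1 < A) (hB : -1 < B) :
    IntegrableOn (fun t : ℝ => t ^ A * (1 - t) ^ B) (Set.Ioo 0 1) := by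
  have h := Complex.betaIntegral_convergent (u := ((A+1:ℝ):ℂ)) (v := ((B+1:ℝ):ℂ))
    (by simp; linarith) (by simp; linarith)
  rw [intervalIntegrable_iff_integrableOn_Ioo_of_le zero_le_one] at h
  have h2 := h.norm
  refine IntegrableOn.congr_fun h2 (fun t ht => ?_) measurableSet_Ioo
  have h1t : 0 < 1 - t := by linarith [ht.2]
  have : (1 - (t:ℂ)) = ((1 - t : ℝ) : ℂ) := by push_cast; rfl
  simp only [norm_mul]
  rw [this, Complex.norm_cpow_eq_rpow_re_of_pos ht.1, Complex.norm_cpow_eq_rpow_re_of_pos h1t]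
  simp

lemma FB_integrableOn {A B : ℝ} (hA : -1 < A) (hB : -1 < B) {y : ℝ} (hy : 0 ≤ y) :
    IntegrableOn (fun t : ℝ => Real.exp (-y * t) * t ^ A * (1 - t) ^ B) (Set.Ioo 0 1) := by
  refine Integrable.mono' (beta_integrableOn hA hB) (by fun_prop) ?_
  refine (ae_restrict_iff' measurableSet_Ioo).2 (Filter.Eventually.of_forall fun t ht => ?_)
  have h1 : 0 < t := ht.1
  have h1t : 0 < 1 - t := by linarith [ht.2]
  rw [Real.norm_of_nonneg (by positivity), mul_assoc]
  have : Real.exp (-y * t) ≤ 1 := Real.exp_le_one_iff.2 (by nlinarith)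
  exact mul_le_of_le_one_left (by positivity) this

lemma aux_half {B x : ℝ} (h1 : 1/2 ≤ x) (h2 : x ≤ 1) :
    (1/2:ℝ) ^ |B| ≤ x ^ B ∧ x ^ B ≤ 2 ^ |B| := by
  have hx : 0 < x := by linarith
  have h3 : (1/2:ℝ) ^ |B| = ((2:ℝ) ^ |B|)⁻¹ := by
    rw [← Real.inv_rpow (by norm_num)]; norm_num
  rcases le_total 0 B with hB | hB
  · rw [abs_of_nonneg hB]
    refine ⟨by gcongr, ?_⟩
    calc x ^ B ≤ 1 := Real.rpow_le_one hx.le h2 hB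
      _ ≤ _ := Real.one_le_rpow (by norm_num) hB
  · rw [h3, abs_of_nonpos hB]
    have h4 : x ^ B = (x ^ (-B))⁻¹ := by rw [Real.rpow_neg hx.le, inv_inv]
    have hB' : 0 ≤ -B := by linarith
    have h5 : (1/2:ℝ) ^ (-B) ≤ x ^ (-B) := by gcongr
    have h6 : (1/2:ℝ) ^ (-B) = ((2:ℝ) ^ (-B))⁻¹ := by
      rw [← Real.inv_rpow (by norm_num)]; norm_num
    have h7 : 0 < x ^ (-B) := by positivity
    have h8 : x ^ (-B) ≤ 1 := Real.rpow_le_one hx.le h2 hB'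
    rw [h4]
    constructor
    · apply inv_anti₀ h7
      exact h8.trans (Real.one_le_rpow (by norm_num) hB')
    · rw [h6] at h5
      exact inv_le_of_inv_le₀ (by positivity) h5

lemma FB_upper {A B : ℝ} (hA : -1 < A) (hB : -1 < B) :
    ∃ C : ℝ, 0 < C ∧ ∀ y : ℝ, 0 ≤ y → FB A B y ≤ C * (1 + y) ^ (-(A+1)) := by
  have hA1 : 0 < A + 1 := by linarith
  obtain ⟨C0, hC0, hexp⟩ := aux_exp_rpow (A+1) hA1
  set I := ∫ t in Set.Ioo (0:ℝ) 1, t ^ A * (1 - t) ^ B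
  have hI : 0 ≤ I := setIntegral_nonneg measurableSet_Ioo fun t ht => by
    have h1 : 0 < t := ht.1
    have h1t : 0 < 1 - t := by linarith [ht.2]
    positivity
  set c1 := Real.exp 1 * 2 ^ |B|
  set c2 := C0 * 2 ^ (A+1)
  have hG := Real.Gamma_pos_of_pos hA1
  refine ⟨c1 * Real.Gamma (A+1) + c2 * I, by positivity, fun y hy => ?_⟩
  have hy1 : 0 < 1 + y := by linarith
  have hint1 : IntegrableOn (fun t : ℝ => t ^ A * Real.exp (-((1+y) * t))) (Set.Ioi 0) := by
    have := integrableOn_rpow_mul_exp_neg_mul_rpow hA one_pos hy1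
    simpa only [Real.rpow_one, neg_mul] using this
  have hint1' := hint1.mono_set (show Set.Ioo (0:ℝ) 1 ⊆ Set.Ioi 0 from Set.Ioo_subset_Ioi_self)
  have hval1 := Real.integral_rpow_mul_exp_neg_mul_Ioi hA1 hy1
  have hint2 := beta_integrableOn hA hB
  have hmono : FB A B y ≤ ∫ t in Set.Ioo (0:ℝ) 1,
      (c1 * (t ^ A * Real.exp (-((1+y) * t))) + c2 * (1+y)^(-(A+1)) * (t ^ A * (1 - t) ^ B)) := by
    refine setIntegral_mono_on (FB_integrableOn hA hB hy)
      ((hint1'.const_mul _).add (hint2.const_mul _)) measurableSet_Ioo fun t ht => ?_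
    have h1 : 0 < t := ht.1
    have h1t : 0 < 1 - t := by linarith [ht.2]
    rcases le_total t (1/2) with h | h
    · have e1 := (aux_half (B := B) (x := 1 - t) (by linarith) (by linarith)).2
      have e2 : Real.exp (-y * t) ≤ Real.exp 1 * Real.exp (-((1+y) * t)) := by
        rw [← Real.exp_add]; apply Real.exp_le_exp.2; nlinarith
      calc Real.exp (-y * t) * t ^ A * (1 - t) ^ B
          ≤ (Real.exp 1 * Real.exp (-((1+y) * t))) * t ^ A * 2 ^ |B| := by gcongr
        _ = c1 * (t ^ A * Real.exp (-((1+y) * t))) := by simp only [c1]; ring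
        _ ≤ _ := by
          have : 0 ≤ c2 * (1+y)^(-(A+1)) * (t ^ A * (1 - t) ^ B) := by positivity
          linarith
    · have e3 := hexp (y*t) (by positivity)
      have e4 : Real.exp (-(y*t/2)) ≤ 1 := Real.exp_le_one_iff.2 (by nlinarith [mul_nonneg hy h1.le])
      have e5 : ((1+y)/2) ^ (A+1) ≤ (1 + y*t) ^ (A+1) := by
        apply Real.rpow_le_rpow (by positivity) _ hA1.le
        nlinarith
      rw [Real.div_rpow (by positivity) (by norm_num)] at e5
      have e6 : Real.exp (-y * t) ≤ c2 * (1+y)^(-(A+1)) := by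
        rw [Real.rpow_neg hy1.le, ← div_eq_mul_inv, le_div_iff₀ (by positivity)]
        have : (1+y)^(A+1) * Real.exp (-(y*t)) ≤ 2^(A+1) * ((1 + y*t)^(A+1) * Real.exp (-(y*t))) := by
          rw [← mul_assoc]
          gcongr
          rwa [div_le_iff₀' (by positivity)] at e5
        calc _ = (1+y)^(A+1) * Real.exp (-(y*t)) := by rw [neg_mul, mul_comm]
          _ ≤ _ := this
          _ ≤ 2^(A+1) * (C0 * 1) :=
            mul_le_mul_of_nonneg_left (e3.trans (by gcongr)) (by positivity)
          _ = _ := by simp only [c2]; ring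
      calc Real.exp (-y * t) * t ^ A * (1 - t) ^ B
          = Real.exp (-y * t) * (t ^ A * (1 - t) ^ B) := by ring
        _ ≤ c2 * (1+y)^(-(A+1)) * (t ^ A * (1 - t) ^ B) := by gcongr
        _ ≤ _ := by
          have : 0 ≤ c1 * (t ^ A * Real.exp (-((1+y) * t))) := by positivity
          linarith
  refine hmono.trans ?_
  rw [integral_add (hint1'.const_mul _) (hint2.const_mul _), integral_const_mul, integral_const_mul]
  have : ∫ t in Set.Ioo (0:ℝ) 1, t ^ A * Real.exp (-((1+y) * t)) ≤ (1 + y) ^ (-(A+1)) * Real.Gamma (A+1) := by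
    have h := setIntegral_mono_set (s := Set.Ioo (0:ℝ) 1) hint1 ((ae_restrict_iff' measurableSet_Ioi).2
      (Filter.Eventually.of_forall fun t (ht : 0 < t) => by
        show 0 ≤ t ^ A * Real.exp (-((1+y) * t)); positivity))
      (Set.Ioo_subset_Ioi_self).eventuallyLE
    refine h.trans (le_of_eq ?_)
    have hh : A + 1 - 1 = A := by ring
    rw [hh] at hval1
    rw [hval1, Real.rpow_neg hy1.le, one_div, Real.inv_rpow hy1.le]
  calc _ ≤ c1 * ((1 + y) ^ (-(A+1)) * Real.Gamma (A+1)) + c2 * (1+y)^(-(A+1)) * I := by gcongr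
    _ = _ := by ring

lemma FB_lower {A B : ℝ} (hA : -1 < A) (hB : -1 < B) :
    ∃ c : ℝ, 0 < c ∧ ∀ y : ℝ, 0 ≤ y → c * (1 + y) ^ (-(A+1)) ≤ FB A B y := by
  have hA1 : 0 < A + 1 := by linarith
  set c0 := Real.exp (-1) * (1/2) ^ |B|
  refine ⟨c0 * ((1/2)^(A+1) / (A+1)), by positivity, fun y hy => ?_⟩
  have hy1 : 0 < 1 + y := by linarith
  set d := 1 / 2 * (1+y)⁻¹ with hd
  have hd0 : 0 < d := by positivity
  have hinv : (1+y)⁻¹ ≤ 1 := inv_le_one_of_one_le₀ (by linarith)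
  have hd2 : d ≤ 1/2 := by simp only [hd]; linarith
  have hdy : d * (1 + y) = 1/2 := by simp only [hd]; field_simp
  have hint := FB_integrableOn hA hB hy
  have hsub : Set.Ioo 0 d ⊆ Set.Ioo (0:ℝ) 1 := Set.Ioo_subset_Ioo_right (by linarith)
  have h1 : ∫ t in Set.Ioo (0:ℝ) d, Real.exp (-y * t) * t ^ A * (1 - t) ^ B ≤ FB A B y := by
    refine setIntegral_mono_set hint ((ae_restrict_iff' measurableSet_Ioo).2
      (Filter.Eventually.of_forall fun t ht => ?_)) hsub.eventuallyLE
    have h1 : 0 < t := ht.1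
    have h1t : 0 < 1 - t := by linarith [ht.2]
    show 0 ≤ Real.exp (-y * t) * t ^ A * (1 - t) ^ B
    positivity
  have hii : IntegrableOn (fun t : ℝ => t ^ A) (Set.Ioo 0 d) := by
    rw [← intervalIntegrable_iff_integrableOn_Ioo_of_le hd0.le]
    exact intervalIntegral.intervalIntegrable_rpow' hA
  have h2 : ∫ t in Set.Ioo (0:ℝ) d, c0 * t ^ A ≤ ∫ t in Set.Ioo (0:ℝ) d, Real.exp (-y * t) * t ^ A * (1 - t) ^ B := by
    refine setIntegral_mono_on (hii.const_mul _) (hint.mono_set hsub) measurableSet_Ioo fun t ht => ?_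
    have h1 : 0 < t := ht.1
    have h2 : t < d := ht.2
    have e1 := (aux_half (B := B) (x := 1 - t) (by linarith) (by linarith)).1
    have e2 : Real.exp (-1) ≤ Real.exp (-y * t) := by
      apply Real.exp_le_exp.2; nlinarith
    calc c0 * t ^ A = Real.exp (-1) * t ^ A * (1/2)^|B| := by simp only [c0]; ring
      _ ≤ _ := by gcongr
  refine le_trans (le_of_eq ?_) (h2.trans h1)
  rw [integral_const_mul, ← integral_Ioc_eq_integral_Ioo, ← intervalIntegral.integral_of_le hd0.le,
    integral_rpow (Or.inl hA), Real.zero_rpow hA1.ne', hd, Real.mul_rpow (by norm_num) (by positivity),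
    Real.inv_rpow hy1.le, Real.rpow_neg hy1.le]
  ring

/-- scaled -/
lemma FB_scale {A B : ℝ} {a p : ℝ} (ha : 0 < a) :
    ∫ u in Set.Ioo (0:ℝ) a, Real.exp (-p * u) * u ^ A * (a - u) ^ B
      = a ^ (A + B + 1) * FB A B (a * p) := by
  have h := intervalIntegral.integral_comp_mul_left (a := 0) (b := 1)
    (fun u : ℝ => Real.exp (-p * u) * u ^ A * (a - u) ^ B) ha.ne'
  rw [mul_zero, mul_one, intervalIntegral.integral_of_le ha.le, integral_Ioc_eq_integral_Ioo,
    intervalIntegral.integral_of_le zero_le_one, integral_Ioc_eq_integral_Ioo, smul_eq_mul] at h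
  have h' : ∫ u in Set.Ioo (0:ℝ) a, Real.exp (-p * u) * u ^ A * (a - u) ^ B = a * ∫ t in Set.Ioo (0:ℝ) 1,
    Real.exp (-p * (a * t)) * (a * t) ^ A * (a - (a * t)) ^ B := by
    rw [h]; field_simp
  rw [h', FB, ← integral_const_mul, ← integral_const_mul]
  refine setIntegral_congr_fun measurableSet_Ioo fun t ht => ?_
  have h1 : 0 < t := ht.1
  have h1t : 0 < 1 - t := by linarith [ht.2]
  have e : a - a * t = a * (1 - t) := by ring
  simp only [e]
  rw [Real.mul_rpow ha.le h1.le, Real.mul_rpow ha.le h1t.le, Real.rpow_add ha, Real.rpow_add ha,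
    Real.rpow_one]
  have : -p * (a * t) = -(a * p) * t := by ring
  rw [this]; ring

lemma FB_scale_int {A B : ℝ} (hA : -1 < A) (hB : -1 < B) {a p : ℝ} (ha : 0 < a) (hp : 0 ≤ p) :
    IntegrableOn (fun u : ℝ => Real.exp (-p * u) * u ^ A * (a - u) ^ B) (Set.Ioo 0 a) := by
  have h := FB_integrableOn hA hB (y := a * p) (by positivity)
  rw [← intervalIntegrable_iff_integrableOn_Ioo_of_le zero_le_one] at h
  rw [← intervalIntegrable_iff_integrableOn_Ioo_of_le ha.le]
  have h2 := (h.comp_mul_left (c := a⁻¹)).const_mul (a ^ (A + B))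
  simp only [zero_div, one_div, inv_inv] at h2
  refine h2.congr_uIoo (fun u hu => ?_)
  rw [Set.uIoo_of_le ha.le] at hu
  have h1 : 0 < u := hu.1
  have h1t : 0 < a - u := by linarith [hu.2]
  have e : 1 - a⁻¹ * u = a⁻¹ * (a - u) := by field_simp
  simp only [e]
  rw [Real.mul_rpow (by positivity) h1.le, Real.mul_rpow (by positivity) h1t.le, Real.rpow_add ha,
    Real.inv_rpow ha.le, Real.inv_rpow ha.le]
  have : -(a * p) * (a⁻¹ * u) = -p * u := by field_simp
  rw [this]; field_simp

lemma Erk1_eq_pos (k x v : ℝ) (hk : 0 < k) : Erk1 k x v =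
    (Real.Gamma (k + 1/2) / (Real.sqrt Real.pi * Real.Gamma k)) * 4 ^ k *
      (Real.exp (x * v) * FB (k-1) k (2 * (x * v))) := by
  have h := intervalIntegral.integral_comp_sub_mul (a := 0) (b := 1)
    (fun z : ℝ => Real.exp (z * x * v) * (1 - z) ^ (k - 1) * (1 + z) ^ k) (two_ne_zero (α := ℝ)) 1
  rw [show (1:ℝ) - 2 * 1 = -1 by norm_num, show (1:ℝ) - 2 * 0 = 1 by norm_num, smul_eq_mul] at h
  rw [eq_comm, inv_mul_eq_iff_eq_mul₀ two_ne_zero] at h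
  unfold Erk1
  rw [h, mul_assoc]
  congr 1
  rw [intervalIntegral.integral_of_le zero_le_one, integral_Ioc_eq_integral_Ioo, FB,
    ← integral_const_mul, ← integral_const_mul, ← integral_const_mul]
  refine setIntegral_congr_fun measurableSet_Ioo fun t ht => ?_
  have h1 : 0 < t := ht.1
  have h1t : 0 < 1 - t := by linarith [ht.2]
  have e : 1 + (1 - 2 * t) = 2 * (1 - t) := by ring
  have e' : 1 - (1 - 2 * t) = 2 * t := by ring
  have e2 : (4:ℝ)^k = 2 * 2^(k-1) * 2^k := by
    rw [show (4:ℝ) = 2*2 by norm_num, Real.mul_rpow (by norm_num) (by norm_num),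
      Real.rpow_sub_one (by norm_num)]
    ring
  have e3 : Real.exp ((1 - 2*t) * x * v) = Real.exp (x * v) * Real.exp (-(2 * (x * v)) * t) := by
    rw [← Real.exp_add]; congr 1; ring
  simp only [e, e', e2, e3]
  rw [Real.mul_rpow (by norm_num) h1.le, Real.mul_rpow (by norm_num) h1t.le]
  ring

lemma Erk1_eq_neg (k x v : ℝ) (hk : 0 < k) : Erk1 k (-x) v =
    (Real.Gamma (k + 1/2) / (Real.sqrt Real.pi * Real.Gamma k)) * 4 ^ k *
      (Real.exp (x * v) * FB k (k-1) (2 * (x * v))) := by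
  have h := intervalIntegral.integral_comp_mul_sub (a := 0) (b := 1)
    (fun z : ℝ => Real.exp (z * (-x) * v) * (1 - z) ^ (k - 1) * (1 + z) ^ k) (two_ne_zero (α := ℝ)) 1
  rw [show (2:ℝ) * 0 - 1 = -1 by norm_num, show (2:ℝ) * 1 - 1 = 1 by norm_num, smul_eq_mul] at h
  rw [eq_comm, inv_mul_eq_iff_eq_mul₀ two_ne_zero] at h
  unfold Erk1
  rw [h, mul_assoc]
  congr 1
  rw [intervalIntegral.integral_of_le zero_le_one, integral_Ioc_eq_integral_Ioo, FB,
    ← integral_const_mul, ← integral_const_mul, ← integral_const_mul]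
  refine setIntegral_congr_fun measurableSet_Ioo fun t ht => ?_
  have h1 : 0 < t := ht.1
  have h1t : 0 < 1 - t := by linarith [ht.2]
  have e : 1 - (2 * t - 1) = 2 * (1 - t) := by ring
  have e' : 1 + (2 * t - 1) = 2 * t := by ring
  have e2 : (4:ℝ)^k = 2 * 2^(k-1) * 2^k := by
    rw [show (4:ℝ) = 2*2 by norm_num, Real.mul_rpow (by norm_num) (by norm_num),
      Real.rpow_sub_one (by norm_num)]
    ring
  have e3 : Real.exp ((2*t-1) * (-x) * v) = Real.exp (x * v) * Real.exp (-(2 * (x * v)) * t) := by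
    rw [← Real.exp_add]; congr 1; ring
  simp only [e, e', e2, e3]
  rw [Real.mul_rpow (by norm_num) h1.le, Real.mul_rpow (by norm_num) h1t.le]
  ring

lemma Erk1_bounds (k : ℝ) (hk : 0 < k) : ∃ c C : ℝ, 0 < c ∧ 0 < C ∧ ∀ s v : ℝ, 0 ≤ s → 0 ≤ v →
    0 ≤ Erk1 k (-(s/2)) v ∧
    Erk1 k (-(s/2)) v ≤ C * (Real.exp (s*v/2) * (1 + s*v) ^ (-(k+1))) ∧
    c * (Real.exp (s*v/2) * (1 + s*v) ^ (-k)) ≤ Erk1 k (s/2) v ∧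
    Erk1 k (s/2) v ≤ C * (Real.exp (s*v/2) * (1 + s*v) ^ (-k)) := by
  obtain ⟨C1, hC1, h1⟩ := FB_upper (A := k) (B := k-1) (by linarith) (by linarith)
  obtain ⟨C2, hC2, h2⟩ := FB_upper (A := k-1) (B := k) (by linarith) (by linarith)
  obtain ⟨c1, hc1, h3⟩ := FB_lower (A := k) (B := k-1) (by linarith) (by linarith)
  obtain ⟨c2, hc2, h4⟩ := FB_lower (A := k-1) (B := k) (by linarith) (by linarith)
  have hg1 := Real.Gamma_pos_of_pos hk
  have hg2 : 0 < Real.Gamma (k + 1/2) := Real.Gamma_pos_of_pos (by linarith)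
  set D := (Real.Gamma (k + 1/2) / (Real.sqrt Real.pi * Real.Gamma k)) * 4 ^ k with hD
  have hD0 : 0 < D := by positivity
  refine ⟨D * c2, D * (C1 + C2), by positivity, by positivity, fun s v hs hv => ?_⟩
  have hsv : 0 ≤ s * v := by positivity
  have e1 : s/2*v = s*v/2 := by ring
  have e2 : 2 * (s*v/2) = s*v := by ring
  have e3 : k - 1 + 1 = k := by ring
  rw [Erk1_eq_neg k _ _ hk, Erk1_eq_pos k _ _ hk, ← hD, e1, e2]
  have h1 := h1 _ hsv
  have h2 := h2 _ hsv
  have h3 := h3 _ hsv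
  have h4 := h4 _ hsv
  rw [e3] at h2 h4
  have hp1 : 0 < (1 + s*v) ^ (-(k+1)) := by positivity
  have hp2 : 0 < (1 + s*v) ^ (-k) := by positivity
  have h0 : 0 ≤ FB k (k-1) (s*v) := le_trans (by positivity) h3
  refine ⟨by positivity, ?_, ?_, ?_⟩
  · calc _ ≤ D * (Real.exp (s*v/2) * ((C1 + C2) * (1 + s*v) ^ (-(k+1)))) := by
          gcongr; refine h1.trans ?_; gcongr; linarith
      _ = _ := by ring
  · calc _ = D * (Real.exp (s*v/2) * (c2 * (1 + s*v) ^ (-k))) := by ring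
      _ ≤ _ := by gcongr
  · calc _ ≤ D * (Real.exp (s*v/2) * ((C1 + C2) * (1 + s*v) ^ (-k))) := by
          gcongr; refine h2.trans ?_; gcongr; linarith
      _ = _ := by ring

lemma Erk1_measurable (k x : ℝ) : Measurable (fun v => Erk1 k x v) := by
  unfold Erk1
  refine Measurable.const_mul ?_ _
  simp_rw [intervalIntegral.integral_of_le (show (-1:ℝ) ≤ 1 by norm_num)]
  apply StronglyMeasurable.measurable
  apply StronglyMeasurable.integral_prod_right
  apply Measurable.stronglyMeasurable
  simp only [Function.uncurry_def]
  fun_prop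

lemma iter_bounds {K : ℝ → ℝ → ℝ} (hK : Measurable (Function.uncurry K)) {a b : ℝ}
    {f1 f2 g1 g2 : ℝ → ℝ}
    (hf1 : IntegrableOn f1 (Set.Ioo 0 a)) (hf2 : IntegrableOn f2 (Set.Ioo 0 a))
    (hg1 : IntegrableOn g1 (Set.Ioo 0 b)) (hg2 : IntegrableOn g2 (Set.Ioo 0 b))
    (h0 : ∀ w ∈ Set.Ioo 0 b, ∀ u ∈ Set.Ioo 0 a, 0 ≤ K w u)
    (h1 : ∀ w ∈ Set.Ioo 0 b, ∀ u ∈ Set.Ioo 0 a, g1 w * f1 u ≤ K w u)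
    (h2 : ∀ w ∈ Set.Ioo 0 b, ∀ u ∈ Set.Ioo 0 a, K w u ≤ g2 w * f2 u) :
    (∫ w in Set.Ioo 0 b, g1 w) * (∫ u in Set.Ioo 0 a, f1 u)
      ≤ ∫ w in Set.Ioo 0 b, ∫ u in Set.Ioo 0 a, K w u ∧
    ∫ w in Set.Ioo 0 b, ∫ u in Set.Ioo 0 a, K w u ≤
      (∫ w in Set.Ioo 0 b, g2 w) * (∫ u in Set.Ioo 0 a, f2 u) := by
  have hin : ∀ w ∈ Set.Ioo 0 b, IntegrableOn (K w) (Set.Ioo 0 a) := fun w hw => by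
    refine Integrable.mono' (hf2.const_mul (g2 w))
      (hK.comp measurable_prodMk_left).aestronglyMeasurable ?_
    refine (ae_restrict_iff' measurableSet_Ioo).2 (Filter.Eventually.of_forall fun u hu => ?_)
    rw [Real.norm_of_nonneg (h0 w hw u hu)]
    exact h2 w hw u hu
  have hu : ∀ w ∈ Set.Ioo 0 b, ∫ u in Set.Ioo 0 a, K w u ≤ g2 w * ∫ u in Set.Ioo 0 a, f2 u :=
    fun w hw => by
      rw [← integral_const_mul]
      exact setIntegral_mono_on (hin w hw) (hf2.const_mul _) measurableSet_Ioo (h2 w hw)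
  have hl : ∀ w ∈ Set.Ioo 0 b, g1 w * ∫ u in Set.Ioo 0 a, f1 u ≤ ∫ u in Set.Ioo 0 a, K w u :=
    fun w hw => by
      rw [← integral_const_mul]
      exact setIntegral_mono_on (hf1.const_mul _) (hin w hw) measurableSet_Ioo (h1 w hw)
  have hn : ∀ w ∈ Set.Ioo 0 b, 0 ≤ ∫ u in Set.Ioo 0 a, K w u :=
    fun w hw => setIntegral_nonneg measurableSet_Ioo (h0 w hw)
  have hout : IntegrableOn (fun w => ∫ u in Set.Ioo 0 a, K w u) (Set.Ioo 0 b) := by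
    refine Integrable.mono' (hg2.mul_const (∫ u in Set.Ioo 0 a, f2 u))
      (StronglyMeasurable.integral_prod_right hK.stronglyMeasurable).aestronglyMeasurable ?_
    refine (ae_restrict_iff' measurableSet_Ioo).2 (Filter.Eventually.of_forall fun w hw => ?_)
    rw [Real.norm_of_nonneg (hn w hw)]
    exact hu w hw
  rw [← integral_mul_const, ← integral_mul_const]
  exact ⟨setIntegral_mono_on (hg1.mul_const _) hout measurableSet_Ioo hl,
    setIntegral_mono_on hout (hg2.mul_const _) measurableSet_Ioo hu⟩

lemma trans_int (Φ : ℝ → ℝ → ℝ) {l1 l2 l3 : ℝ} (h1 : l2 < l1) (h2 : l3 < l2) :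
    ∫ n2 in l3..l2, ∫ n1 in l2..l1, Φ n2 n1 =
      ∫ w in Set.Ioo 0 (l2 - l3), ∫ u in Set.Ioo 0 (l1 - l2), Φ (w + l3) (l1 - u) := by
  have hi : ∀ n2, ∫ n1 in l2..l1, Φ n2 n1 = ∫ u in Set.Ioo 0 (l1 - l2), Φ n2 (l1 - u) := by
    intro n2
    have := intervalIntegral.integral_comp_sub_left (a := 0) (b := l1 - l2) (fun n1 => Φ n2 n1) l1
    rw [← integral_Ioc_eq_integral_Ioo, ← intervalIntegral.integral_of_le (by linarith), this]
    simp
  simp_rw [hi]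
  have := intervalIntegral.integral_comp_add_right (a := 0) (b := l2 - l3)
    (fun n2 => ∫ u in Set.Ioo 0 (l1 - l2), Φ n2 (l1 - u)) l3
  rw [← integral_Ioc_eq_integral_Ioo, ← intervalIntegral.integral_of_le (by linarith), this]
  simp

/-- reduced kernel -/
noncomputable def redK (k a b p q w u : ℝ) : ℝ :=
  Real.exp (-p*u) * Real.exp (-q*w) *
   ((a-u)*(a+b-w)*(1+(p+q)*(a+b-u-w))^(-(k+1)) + u*(b-w)*(1+(p+q)*(a+b-u-w))^(-k))
   * ((a+b-u)*w) * (u*(a+b-w)*(a-u)*(b-w)*(a+b-u)*w)^(k-1)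

lemma redK_lower {k a b p q w u : ℝ} (hk : 0 < k) (hab : a ≤ b) (hp : 0 ≤ p) (hq : 0 ≤ q)
    (hu : 0 < u) (hua : u < a) (hw : 0 < w) (hwb : w < b) :
    (1+(p+q)*(a+b))^(-k) * b^k * (2*b)⁻¹ * (Real.exp (-q*w) * w^k * (b-w)^(2*k)) *
      (Real.exp (-p*u) * u^k * (a-u)^(k-1)) ≤
    Real.exp (-p*u) * Real.exp (-q*w) * (u*(b-w)*(1+(p+q)*(a+b-u-w))^(-k))
   * ((a+b-u)*w) * (u*(a+b-w)*(a-u)*(b-w)*(a+b-u)*w)^(k-1) := by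
  have h1 : 0 < a - u := by linarith
  have h2 : 0 < b - w := by linarith
  have h3 : 0 < a + b - w := by linarith
  have h4 : 0 < a + b - u := by linarith
  have h5 : 0 < a + b - u - w := by linarith
  have hb : 0 < b := by linarith
  have hs : 0 ≤ p + q := by linarith
  have m1 : ∀ x : ℝ, 0 < x → x ^ k = x * x^(k-1) := fun x hx => by
    rw [Real.rpow_sub_one hx.ne']; field_simp
  have e1 : (u*(a+b-w)*(a-u)*(b-w)*(a+b-u)*w)^(k-1) =
    u^(k-1)*(a+b-w)^(k-1)*(a-u)^(k-1)*(b-w)^(k-1)*(a+b-u)^(k-1)*w^(k-1) := by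
    rw [Real.mul_rpow (by positivity) hw.le, Real.mul_rpow (by positivity) h4.le,
      Real.mul_rpow (by positivity) h2.le, Real.mul_rpow (by positivity) h1.le,
      Real.mul_rpow (by positivity) h3.le]
  have e2 : Real.exp (-p*u) * Real.exp (-q*w) * (u*(b-w)*(1+(p+q)*(a+b-u-w))^(-k))
   * ((a+b-u)*w) * (u*(a+b-w)*(a-u)*(b-w)*(a+b-u)*w)^(k-1) =
    (1+(p+q)*(a+b-u-w))^(-k) * (a+b-u)^k * (a+b-w)^(k-1) * (b-w)^k * (Real.exp (-q*w) * w^k) *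
      (Real.exp (-p*u) * u^k * (a-u)^(k-1)) := by
    rw [e1, m1 u hu, m1 w hw, m1 _ h4, m1 _ h2]; ring
  rw [e2]
  have f1 : (1+(p+q)*(a+b))^(-k) ≤ (1+(p+q)*(a+b-u-w))^(-k) := by
    apply Real.rpow_le_rpow_of_nonpos (by positivity) _ (by linarith)
    gcongr; linarith
  have f2 : b^k ≤ (a+b-u)^k := by gcongr; linarith
  have f3 : (2*b)⁻¹ * (b-w)^k ≤ (a+b-w)^(k-1) := by
    rw [Real.rpow_sub_one h3.ne', inv_mul_eq_div]
    gcongr <;> linarith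
  have e3 : (b-w)^(2*k) = (b-w)^k * (b-w)^k := by rw [← Real.rpow_add h2]; ring_nf
  calc _ = (1+(p+q)*(a+b))^(-k) * b^k * ((2*b)⁻¹ * (b-w)^k) * (b-w)^k * (Real.exp (-q*w) * w^k) *
      (Real.exp (-p*u) * u^k * (a-u)^(k-1)) := by rw [e3]; ring
    _ ≤ _ := by gcongr

set_option maxHeartbeats 2000000 in
lemma redK_upper {k : ℝ} (hk : 0 < k) : ∃ C : ℝ, 0 < C ∧ ∀ {a b p q w u : ℝ},
    a ≤ b → 0 ≤ p → 0 ≤ q → 0 < u → u < a → 0 < w → w < b →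
    redK k a b p q w u ≤ C * ((a+b)^k * (a+b)^k * (1+(p+q)*(a+b))^(-k)) *
      (Real.exp (-(q/2)*w) * w^k * (b-w)^(k-1)) *
      ((1+a*p)⁻¹ * (Real.exp (-(p/2)*u) * u^(k-1) * (a-u)^k) +
        Real.exp (-(p/2)*u) * u^k * (a-u)^(k-1)) := by
  obtain ⟨C0, hC0, hexp⟩ := aux_exp_rpow (k+1) (by linarith)
  refine ⟨4^k * (C0 * C0), by positivity, ?_⟩
  intro a b p q w u hab hp hq hu hua hw hwb
  have h1 : 0 < a - u := by linarith
  have h2 : 0 < b - w := by linarith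
  have h3 : 0 < a + b - w := by linarith
  have h4 : 0 < a + b - u := by linarith
  have hv : 0 < a + b - u - w := by linarith
  have hb : 0 < b := by linarith
  have ha : 0 < a := by linarith
  have hs : 0 ≤ p + q := by linarith
  have m1 : ∀ x : ℝ, 0 < x → x ^ k = x * x^(k-1) := fun x hx => by
    rw [Real.rpow_sub_one hx.ne']; field_simp
  have e1 : (u*(a+b-w)*(a-u)*(b-w)*(a+b-u)*w)^(k-1) =
    u^(k-1)*(a+b-w)^(k-1)*(a-u)^(k-1)*(b-w)^(k-1)*(a+b-u)^(k-1)*w^(k-1) := by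
    rw [Real.mul_rpow (by positivity) hw.le, Real.mul_rpow (by positivity) h4.le,
      Real.mul_rpow (by positivity) h2.le, Real.mul_rpow (by positivity) h1.le,
      Real.mul_rpow (by positivity) h3.le]
  set T := 1 + (p+q)*(a+b-u-w) with hT
  have hT0 : 0 < T := by positivity
  set R := (1+p*u)*(1+q*w) with hR
  have hpu : 0 ≤ p*u := by positivity
  have hqw : 0 ≤ q*w := by positivity
  have hR1 : 1 ≤ R := by
    simp only [hR]; nlinarith [mul_nonneg hpu hqw]
  have hR0 : 0 < R := by linarith
  have hG0 : 0 < 1 + (p+q)*(a+b) := by positivity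
  -- inequality B
  have hB : T⁻¹ ≤ R * (1+a*p)⁻¹ := by
    rw [← div_eq_mul_inv, le_div_iff₀ (by positivity), inv_mul_le_iff₀ hT0]
    have t1 : 1 + p*(a+b-u-w) ≤ T := by
      simp only [hT]; nlinarith [mul_nonneg hq hv.le]
    have t2 : 1 + a*p ≤ (1 + p*(a+b-u-w)) * (1+p*u) := by
      have : 0 ≤ p*(a+b-u-w) * (p*u) := by positivity
      nlinarith [mul_nonneg hp h2.le]
    calc 1 + a*p ≤ (1 + p*(a+b-u-w)) * (1+p*u) := t2
      _ ≤ T * (1+p*u) := by gcongr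
      _ ≤ T * R := by
        gcongr; simp only [hR]; nlinarith [mul_nonneg hpu hqw]
  -- inequality A
  have hA : (a+b-w) * T⁻¹ ≤ 4 * R * ((a+b) * (1+(p+q)*(a+b))⁻¹) := by
    rw [← div_eq_mul_inv, ← div_eq_mul_inv, ← mul_div_assoc, div_le_div_iff₀ hT0 hG0]
    rcases le_total q p with hqp | hqp
    · have t1 : 1 + p*(a+b-u-w) ≤ T := by
        simp only [hT]; nlinarith [mul_nonneg hq hv.le]
      have t2 : 1 + p*(a+b-w) ≤ (1 + p*(a+b-u-w)) * (1+p*u) := by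
        have : 0 ≤ p*(a+b-u-w) * (p*u) := by positivity
        nlinarith
      have t3 : 1 + p*(a+b-w) ≤ R * T := by
        calc _ ≤ _ := t2
          _ ≤ T * (1+p*u) := by gcongr
          _ ≤ T * R := by
            gcongr; simp only [hR]; nlinarith [mul_nonneg hpu hqw]
          _ = R * T := mul_comm _ _
      calc (a+b-w) * (1 + (p+q)*(a+b)) ≤ (a+b-w) * (1 + (p+p)*(a+b)) := by gcongr
        _ ≤ 4 * (a+b) * (1 + p*(a+b-w)) := by
          have : 0 ≤ p*(a+b)*(a+b-w) := by positivity
          nlinarith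
        _ ≤ 4 * (a+b) * (R * T) := by gcongr
        _ = _ := by ring
    · have t1 : 1 + q*(a+b-u-w) ≤ T := by
        simp only [hT]; nlinarith [mul_nonneg hp hv.le]
      have t2 : 1 + q*(a+b-u) ≤ (1 + q*(a+b-u-w)) * (1+q*w) := by
        have : 0 ≤ q*(a+b-u-w) * (q*w) := by positivity
        nlinarith
      have t3 : 1 + q*(a+b-u) ≤ R * T := by
        calc _ ≤ _ := t2
          _ ≤ T * (1+q*w) := by gcongr
          _ ≤ T * R := by
            gcongr; simp only [hR]; nlinarith [mul_nonneg hpu hqw]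
          _ = R * T := mul_comm _ _
      have t4 : 1 + (p+q)*(a+b) ≤ 4 * (1 + q*(a+b-u)) := by
        have : q*(a+b) ≤ q*(2*(a+b-u)) := by gcongr; linarith
        have : p*(a+b) ≤ q*(a+b) := by gcongr
        nlinarith
      calc (a+b-w) * (1 + (p+q)*(a+b)) ≤ (a+b) * (4 * (1 + q*(a+b-u))) := by
            gcongr; linarith
        _ ≤ (a+b) * (4 * (R * T)) := by gcongr
        _ = _ := by ring
  have hAk : (a+b-w)^k * (T^(-k)) ≤ 4^k * R^k * ((a+b)^k * (1+(p+q)*(a+b))^(-k)) := by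
    have := Real.rpow_le_rpow (by positivity) hA hk.le
    rw [Real.mul_rpow h3.le (by positivity), Real.mul_rpow (x := 4 * R) (by positivity) (by positivity),
      Real.mul_rpow (y := R) (by positivity) (by positivity),
      Real.mul_rpow (x := a + b) (by positivity) (by positivity),
      Real.inv_rpow hT0.le, Real.inv_rpow hG0.le, ← Real.rpow_neg hT0.le, ← Real.rpow_neg hG0.le] at this
    exact this
  have hTk : T^(-(k+1)) = T^(-k) * T⁻¹ := by
    rw [← Real.rpow_neg_one, ← Real.rpow_add hT0]; congr 1; ring
  -- exponential
  have hE : R^(k+1) * (Real.exp (-p*u) * Real.exp (-q*w)) ≤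
      C0 * C0 * (Real.exp (-(p/2)*u) * Real.exp (-(q/2)*w)) := by
    have x1 := hexp (p*u) hpu
    have x2 := hexp (q*w) hqw
    have y1 : -(p*u) = -p*u := by ring
    have y2 : -(q*w) = -q*w := by ring
    have y3 : -(p*u/2) = -(p/2)*u := by ring
    have y4 : -(q*w/2) = -(q/2)*w := by ring
    rw [y1, y3] at x1
    rw [y2, y4] at x2
    calc _ = ((1+p*u)^(k+1) * Real.exp (-p*u)) * ((1+q*w)^(k+1) * Real.exp (-q*w)) := by
          rw [hR, Real.mul_rpow (by positivity) (by positivity)]; ring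
      _ ≤ (C0 * Real.exp (-(p/2)*u)) * (C0 * Real.exp (-(q/2)*w)) := by gcongr
      _ = _ := by ring
  -- main bracket
  have hbr : ((a-u)*(a+b-w)*T^(-(k+1)) + u*(b-w)*T^(-k)) * (a+b-w)^(k-1) ≤
      4^k * R^(k+1) * ((a+b)^k * (1+(p+q)*(a+b))^(-k)) * ((1+a*p)⁻¹ * (a-u) + u) := by
    calc _ ≤ ((a-u)*(a+b-w)*T^(-(k+1)) + u*(a+b-w)*T^(-k)) * (a+b-w)^(k-1) := by
          gcongr; linarith
      _ = ((a+b-w)^k * T^(-k)) * ((a-u) * T⁻¹ + u) := by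
          rw [hTk, m1 _ h3]; ring
      _ ≤ (4^k * R^k * ((a+b)^k * (1+(p+q)*(a+b))^(-k))) * ((a-u) * (R * (1+a*p)⁻¹) + u * R) := by
          gcongr; exact le_mul_of_one_le_right hu.le hR1
      _ = _ := by rw [Real.rpow_add_one hR0.ne']; ring
  have hgu : (a+b-u)^k ≤ (a+b)^k := by gcongr; linarith
  unfold redK
  rw [← hT, e1]
  calc _ = (((a-u)*(a+b-w)*T^(-(k+1)) + u*(b-w)*T^(-k)) * (a+b-w)^(k-1)) *
        (Real.exp (-p*u) * Real.exp (-q*w)) * (a+b-u)^k * w^k * (u^(k-1)*(a-u)^(k-1)*(b-w)^(k-1)) := by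
        rw [m1 _ h4, m1 _ hw]; ring
    _ ≤ (4^k * R^(k+1) * ((a+b)^k * (1+(p+q)*(a+b))^(-k)) * ((1+a*p)⁻¹ * (a-u) + u)) *
        (Real.exp (-p*u) * Real.exp (-q*w)) * (a+b)^k * w^k * (u^(k-1)*(a-u)^(k-1)*(b-w)^(k-1)) := by
        gcongr
    _ = (R^(k+1) * (Real.exp (-p*u) * Real.exp (-q*w))) * (4^k * ((a+b)^k * (1+(p+q)*(a+b))^(-k)) * ((1+a*p)⁻¹ * (a-u) + u)
         * (a+b)^k * w^k * (u^(k-1)*(a-u)^(k-1)*(b-w)^(k-1))) := by ring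
    _ ≤ (C0 * C0 * (Real.exp (-(p/2)*u) * Real.exp (-(q/2)*w))) * (4^k * ((a+b)^k * (1+(p+q)*(a+b))^(-k)) * ((1+a*p)⁻¹ * (a-u) + u)
         * (a+b)^k * w^k * (u^(k-1)*(a-u)^(k-1)*(b-w)^(k-1))) := by gcongr
    _ = _ := by rw [m1 _ hu, m1 _ h1]; ring

/-- shifted integrand -/
noncomputable def fullK (k l1 l2 l3 x1 x2 x3 n2 n1 : ℝ) : ℝ :=
      ((n1 - l2) * (l1 - n2) * Erk1 k ((x1 - x2) / 2) (n1 - n2)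
        + (l1 - n1) * (l2 - n2) * Erk1 k (-(x1 - x2) / 2) (n1 - n2))
      * ((n1 - l3) * (n2 - l3)) * Real.exp ((x1 + x2 - 2 * x3) * (n1 + n2) / 2)
      * Wk k l1 l2 l3 n1 n2

lemma fullK_measurable (k l1 l2 l3 x1 x2 x3 : ℝ) :
    Measurable (Function.uncurry (fun w u => fullK k l1 l2 l3 x1 x2 x3 (w + l3) (l1 - u))) := by
  unfold fullK Wk
  simp only [Function.uncurry_def]
  have h1 := fun x => (Erk1_measurable k x).comp
    (show Measurable (fun z : ℝ × ℝ => l1 - z.2 - (z.1 + l3)) by fun_prop)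
  have h2 := h1 ((x1 - x2) / 2)
  have h3 := h1 (-(x1 - x2) / 2)
  simp only [Function.comp_def] at h2 h3
  fun_prop

lemma fullK_bounds (k : ℝ) (hk : 0 < k) : ∃ c C : ℝ, 0 < c ∧ 0 < C ∧
    ∀ l1 l2 l3 x1 x2 x3 a b p q w u : ℝ, a = l1 - l2 → b = l2 - l3 → p = x2 - x3 → q = x3 - x1 →
      l1 + l2 + l3 = 0 → 0 ≤ p → 0 ≤ q → 0 < u → u < a → 0 < w → w < b →
      fullK k l1 l2 l3 x1 x2 x3 (w + l3) (l1 - u) ≤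
        C * (Real.exp (l1 * x2 + l2 * x3 + l3 * x1) * redK k a b p q w u) ∧
      c * (Real.exp (l1 * x2 + l2 * x3 + l3 * x1) *
        (Real.exp (-p*u) * Real.exp (-q*w) * (u*(b-w)*(1+(p+q)*(a+b-u-w))^(-k))
          * ((a+b-u)*w) * (u*(a+b-w)*(a-u)*(b-w)*(a+b-u)*w)^(k-1))) ≤
        fullK k l1 l2 l3 x1 x2 x3 (w + l3) (l1 - u) := by
  obtain ⟨c, C, hc, hC, hE⟩ := Erk1_bounds k hk
  refine ⟨c, C, hc, hC, ?_⟩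
  intro l1 l2 l3 x1 x2 x3 a b p q w u ha hb hp hq hl hp0 hq0 hu hua hw hwb
  have h1 : 0 < a - u := by linarith
  have h2 : 0 < b - w := by linarith
  have h3 : 0 < a + b - w := by linarith
  have h4 : 0 < a + b - u := by linarith
  have hv : 0 < a + b - u - w := by linarith
  obtain ⟨b1, b2, b3, b4⟩ := hE (p+q) (a+b-u-w) (by linarith) hv.le
  set Y := Real.exp ((p+q)*(a+b-u-w)/2) with hY
  set t1 := (1 + (p+q)*(a+b-u-w))^(-(k+1)) with ht1
  set t2 := (1 + (p+q)*(a+b-u-w))^(-k) with ht2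
  set E1 := Erk1 k (-((p+q)/2)) (a+b-u-w)
  set E2 := Erk1 k ((p+q)/2) (a+b-u-w)
  set X := Real.exp ((x1 + x2 - 2 * x3) * ((l1-u) + (w+l3)) / 2) with hX
  set M := Real.exp (l1 * x2 + l2 * x3 + l3 * x1) with hM
  have hYX : Y * X = M * (Real.exp (-p*u) * Real.exp (-q*w)) := by
    rw [hY, hX, hM, ← Real.exp_add, ← Real.exp_add, ← Real.exp_add]
    congr 1
    subst ha hb hp hq
    linear_combination (-x3) * hl
  set D := (u*(a+b-w)*(a-u)*(b-w)*(a+b-u)*w)^(k-1) with hD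
  have hD0 : 0 ≤ D := by positivity
  have hX0 : 0 ≤ X := by positivity
  have hf : fullK k l1 l2 l3 x1 x2 x3 (w + l3) (l1 - u) =
      ((a-u)*(a+b-w)*E1 + u*(b-w)*E2) * ((a+b-u)*w) * X * D := by
    unfold fullK
    have i1 : (x1 - x2)/2 = -((p+q)/2) := by subst hp hq; ring
    have i2 : -(x1 - x2)/2 = ((p+q)/2) := by subst hp hq; ring
    have i3 : l1 - u - (w + l3) = a+b-u-w := by subst ha hb; ring
    have i4 : Wk k l1 l2 l3 (l1-u) (w+l3) = D := by
      rw [hD]; unfold Wk; congr 1; subst ha hb; ring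
    rw [i1, i2, i3, i4]
    have j1 : l1 - u - l2 = a - u := by subst ha; ring
    have j2 : l1 - (w + l3) = a+b-w := by subst ha hb; ring
    have j3 : l1 - (l1 - u) = u := by ring
    have j4 : l2 - (w + l3) = b-w := by subst hb; ring
    have j5 : l1 - u - l3 = a+b-u := by subst ha hb; ring
    have j6 : w + l3 - l3 = w := by ring
    rw [j1, j2, j3, j4, j5, j6]
  rw [hf]
  constructor
  · calc _ ≤ ((a-u)*(a+b-w)*(C*(Y*t1)) + u*(b-w)*(C*(Y*t2))) * ((a+b-u)*w) * X * D := by gcongr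
      _ = C * ((Y * X) * (((a-u)*(a+b-w)*t1 + u*(b-w)*t2) * ((a+b-u)*w) * D)) := by ring
      _ = _ := by rw [hYX]; unfold redK; rw [← ht1, ← ht2, ← hD]; ring
  · calc _ = c * ((Y*X) * ((u*(b-w)*t2) * ((a+b-u)*w) * D)) := by rw [hYX]; ring
      _ = (0 + u*(b-w)*(c*(Y*t2))) * ((a+b-u)*w) * X * D := by ring
      _ ≤ _ := by
        have : 0 ≤ (a-u)*(a+b-w)*E1 := by positivity
        gcongr

lemma half_rpow {y m : ℝ} (hy : 0 ≤ y) (hm : 0 ≤ m) : (1 + y/2)^(-m) ≤ 2^m * (1+y)^(-m) := by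
  have h : (1+y)/2 ≤ 1 + y/2 := by linarith
  have h2 := Real.rpow_le_rpow_of_nonpos (by positivity) h (show -m ≤ 0 by linarith)
  refine h2.trans (le_of_eq ?_)
  rw [Real.div_rpow (by positivity) (by norm_num), Real.rpow_neg (by norm_num : (0:ℝ) ≤ 2), div_inv_eq_mul, mul_comm]

lemma target_eq (k y1 y2 y3 M : ℝ) (h1 : 0 ≤ y1) (h2 : 0 ≤ y2) (h3 : 0 ≤ y3) :
    M / ((1+y1)^(k+1) * (1+y2)^(k+1) * (1+y3)^k) =
      M * ((1+y1)^(-(k+1)) * (1+y2)^(-(k+1)) * (1+y3)^(-k)) := by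
  rw [Real.rpow_neg (by positivity), Real.rpow_neg (by positivity), Real.rpow_neg (by positivity)]
  field_simp

set_option maxHeartbeats 2000000 in
lemma main_bounds (k : ℝ) (hk : 0 < k) : ∃ c C : ℝ, 0 < c ∧ 0 < C ∧
    ∀ l1 l2 l3 x1 x2 x3 a b p q : ℝ, a = l1 - l2 → b = l2 - l3 → p = x2 - x3 → q = x3 - x1 →
      l1 + l2 + l3 = 0 → 0 ≤ p → 0 ≤ q → 0 < a → a ≤ b →
      c * (Real.exp (l1 * x2 + l2 * x3 + l3 * x1) *
        ((1+a*p)^(-(k+1)) * (1+b*q)^(-(k+1)) * (1+(a+b)*(p+q))^(-k))) ≤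
          EkA2 k x1 x2 x3 l1 l2 l3 ∧
      EkA2 k x1 x2 x3 l1 l2 l3 ≤ C * (Real.exp (l1 * x2 + l2 * x3 + l3 * x1) *
        ((1+a*p)^(-(k+1)) * (1+b*q)^(-(k+1)) * (1+(a+b)*(p+q))^(-k))) := by
  obtain ⟨c0, C0, hc0, hC0, hfull⟩ := fullK_bounds k hk
  obtain ⟨C1, hC1, hred⟩ := redK_upper hk
  obtain ⟨D1, hD1, hF1⟩ := FB_upper (A := k) (B := k-1) (by linarith) (by linarith)
  obtain ⟨D2, hD2, hF2⟩ := FB_upper (A := k-1) (B := k) (by linarith) (by linarith)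
  obtain ⟨d1, hd1, hF3⟩ := FB_lower (A := k) (B := k-1) (by linarith) (by linarith)
  obtain ⟨d2, hd2, hF4⟩ := FB_lower (A := k) (B := 2*k) (by linarith) (by linarith)
  have hg1 := Real.Gamma_pos_of_pos hk
  have hg3 : 0 < Real.Gamma (3*k) := Real.Gamma_pos_of_pos (by linarith)
  set N := 3 * Real.Gamma (3 * k) / Real.Gamma k ^ 2 with hN
  have hN0 : 0 < N := by positivity
  refine ⟨N * (c0 * (2⁻¹ * d2 * d1 * (2^(2*k))⁻¹)),
    N * (C0 * C1 * (D1 * 2^(k+1)) * (D2 * 2^k + D1 * 2^(k+1))), by positivity, by positivity, ?_⟩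
  intro l1 l2 l3 x1 x2 x3 a b p q ha hb hp hq hl hp0 hq0 ha0 hab
  have hb0 : 0 < b := by linarith
  set M := Real.exp (l1 * x2 + l2 * x3 + l3 * x1) with hM
  have hM0 : 0 < M := Real.exp_pos _
  set G := (1+(p+q)*(a+b))^(-k) with hG
  have hs : 0 ≤ p + q := by linarith
  have hG0 : 0 < G := by positivity
  have hEk : EkA2 k x1 x2 x3 l1 l2 l3 = N * ((a*(a+b)*b)^(2*k))⁻¹ *
      ∫ w in Set.Ioo 0 b, ∫ u in Set.Ioo 0 a, fullK k l1 l2 l3 x1 x2 x3 (w + l3) (l1 - u) := by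
    unfold EkA2
    have ht := trans_int (fun n2 n1 => fullK k l1 l2 l3 x1 x2 x3 n2 n1)
      (show l2 < l1 by linarith) (show l3 < l2 by linarith)
    rw [← ha, ← hb] at ht
    rw [← ht]
    have hV : Vlam l1 l2 l3 = a*(a+b)*b := by unfold Vlam; subst ha hb; ring
    rw [hV]
    unfold fullK
    congr 1
    rw [hN]; field_simp
  have hint1 := FB_scale_int (A := k) (B := k-1) (by linarith) (by linarith) ha0 hp0
  have hint2 := FB_scale_int (A := k) (B := 2*k) (by linarith) (by linarith) hb0 hq0
  have hint3 := FB_scale_int (A := k) (B := k-1) (by linarith) (by linarith) hb0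
    (show 0 ≤ q/2 by linarith)
  have hint4 := FB_scale_int (A := k-1) (B := k) (by linarith) (by linarith) ha0
    (show 0 ≤ p/2 by linarith)
  have hint5 := FB_scale_int (A := k) (B := k-1) (by linarith) (by linarith) ha0
    (show 0 ≤ p/2 by linarith)
  have hup : ∀ w ∈ Set.Ioo 0 b, ∀ u ∈ Set.Ioo 0 a,
      fullK k l1 l2 l3 x1 x2 x3 (w + l3) (l1 - u) ≤
      (C0 * M * (C1 * ((a+b)^k * (a+b)^k * G)) * (Real.exp (-(q/2)*w) * w^k * (b-w)^(k-1))) *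
      ((1+a*p)⁻¹ * (Real.exp (-(p/2)*u) * u^(k-1) * (a-u)^k) +
        Real.exp (-(p/2)*u) * u^k * (a-u)^(k-1)) := fun w hw u hu => by
    have e1 := (hfull l1 l2 l3 x1 x2 x3 a b p q w u ha hb hp hq hl hp0 hq0 hu.1 hu.2 hw.1 hw.2).1
    have e2 := hred hab hp0 hq0 hu.1 hu.2 hw.1 hw.2
    refine e1.trans ?_
    calc _ ≤ C0 * (M * _) := mul_le_mul_of_nonneg_left
            (mul_le_mul_of_nonneg_left e2 hM0.le) hC0.le
      _ = _ := by ring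
  have hlo : ∀ w ∈ Set.Ioo 0 b, ∀ u ∈ Set.Ioo 0 a,
      (c0 * M * (G * b^k * (2*b)⁻¹) * (Real.exp (-q*w) * w^k * (b-w)^(2*k))) *
      (Real.exp (-p*u) * u^k * (a-u)^(k-1)) ≤ fullK k l1 l2 l3 x1 x2 x3 (w + l3) (l1 - u) :=
    fun w hw u hu => by
    have e1 := (hfull l1 l2 l3 x1 x2 x3 a b p q w u ha hb hp hq hl hp0 hq0 hu.1 hu.2 hw.1 hw.2).2
    have e2 := redK_lower hk hab hp0 hq0 hu.1 hu.2 hw.1 hw.2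
    refine le_trans ?_ e1
    calc _ = c0 * (M * (G * b^k * (2*b)⁻¹ * (Real.exp (-q*w) * w^k * (b-w)^(2*k)) *
      (Real.exp (-p*u) * u^k * (a-u)^(k-1)))) := by ring
      _ ≤ _ := mul_le_mul_of_nonneg_left (mul_le_mul_of_nonneg_left e2 hM0.le) hc0.le
  have h0 : ∀ w ∈ Set.Ioo 0 b, ∀ u ∈ Set.Ioo 0 a,
      0 ≤ fullK k l1 l2 l3 x1 x2 x3 (w + l3) (l1 - u) := fun w hw u hu => by
    refine le_trans ?_ (hlo w hw u hu)
    have r1 : 0 < u := hu.1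
    have r2 : 0 < w := hw.1
    have r3 : 0 < a - u := by linarith [hu.2]
    have r4 : 0 < b - w := by linarith [hw.2]
    positivity
  obtain ⟨L, U⟩ := iter_bounds (fullK_measurable k l1 l2 l3 x1 x2 x3)
    hint1 ((hint4.const_mul _).add hint5) (hint2.const_mul _) (hint3.const_mul _) h0 hlo hup
  have hsp : (a*(a+b)*b)^(2*k) = a^(2*k) * (a+b)^(2*k) * b^(2*k) := by
    rw [Real.mul_rpow (by positivity) hb0.le, Real.mul_rpow ha0.le (by positivity)]
  have hdd : ∀ x : ℝ, 0 < x → x^k * x^k = x^(2*k) := fun x hx => by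
    rw [← Real.rpow_add hx]; congr 1; ring
  have hGe : (1+(a+b)*(p+q))^(-k) = G := by rw [hG, mul_comm (a+b)]
  have hap : 0 ≤ a * p := by positivity
  have hbq : 0 ≤ b * q := by positivity
  rw [hGe]
  set P := (1+a*p)^(-(k+1)) with hP
  set Q := (1+b*q)^(-(k+1)) with hQ
  have hP0 : 0 < P := by positivity
  have hQ0 : 0 < Q := by positivity
  have k1 : k + (k-1) + 1 = 2*k := by ring
  have k2 : (k-1) + k + 1 = 2*k := by ring
  have k3 : k - 1 + 1 = k := by ring
  have hA2 : 0 < a^(2*k) := by positivity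
  have hB2 : 0 < b^(2*k) := by positivity
  have hAB2 : 0 < (a+b)^(2*k) := by positivity
  rw [hEk, hsp]
  constructor
  · rw [integral_const_mul, FB_scale ha0, FB_scale hb0, k1] at L
    have f1 := hF3 (a*p) hap
    have f2 := hF4 (b*q) hbq
    rw [← hP] at f1
    rw [← hQ] at f2
    have f3 : b^(k + 2*k + 1) = b^k * b^(2*k) * b := by
      rw [Real.rpow_add_one hb0.ne', Real.rpow_add hb0]
    have f4 : (a+b)^(2*k) ≤ 2^(2*k) * b^(2*k) := by
      rw [← Real.mul_rpow (by norm_num) hb0.le]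
      apply Real.rpow_le_rpow (by positivity) (by linarith) (by positivity)
    have L2 : c0 * M * (G * b^k * (2*b)⁻¹) * (b^(k + 2*k + 1) * (d2 * Q)) * (a^(2*k) * (d1 * P)) ≤
        ∫ w in Set.Ioo 0 b, ∫ u in Set.Ioo 0 a, fullK k l1 l2 l3 x1 x2 x3 (w + l3) (l1 - u) := by
      refine le_trans ?_ L
      have f5 : 0 ≤ FB k (2*k) (b*q) := le_trans (by positivity) f2
      gcongr
    have L3 : c0 * M * (G * b^k * (2*b)⁻¹) * (b^(k + 2*k + 1) * (d2 * Q)) * (a^(2*k) * (d1 * P)) =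
        c0 * (2⁻¹ * d2 * d1) * (M * (P * Q * G)) * (a^(2*k) * b^(2*k) * b^(2*k)) := by
      rw [f3, ← hdd b hb0]; field_simp
    rw [L3] at L2
    have L4 : (2^(2*k))⁻¹ ≤ (a^(2*k) * (a+b)^(2*k) * b^(2*k))⁻¹ * (a^(2*k) * b^(2*k) * b^(2*k)) := by
      have : (a^(2*k) * (a+b)^(2*k) * b^(2*k))⁻¹ * (a^(2*k) * b^(2*k) * b^(2*k)) =
          b^(2*k) / (a+b)^(2*k) := by field_simp
      rw [this, le_div_iff₀ hAB2, inv_mul_le_iff₀ (by positivity)]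
      exact f4
    calc _ = N * (c0 * (2⁻¹ * d2 * d1) * (M * (P * Q * G))) * (2^(2*k))⁻¹ := by ring
      _ ≤ N * (c0 * (2⁻¹ * d2 * d1) * (M * (P * Q * G))) *
          ((a^(2*k) * (a+b)^(2*k) * b^(2*k))⁻¹ * (a^(2*k) * b^(2*k) * b^(2*k))) := by gcongr
      _ = N * (a^(2*k) * (a+b)^(2*k) * b^(2*k))⁻¹ *
          (c0 * (2⁻¹ * d2 * d1) * (M * (P * Q * G)) * (a^(2*k) * b^(2*k) * b^(2*k))) := by ring
      _ ≤ _ := by gcongr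
  · have hadd : ∫ u in Set.Ioo 0 a, ((1+a*p)⁻¹ * (Real.exp (-(p/2)*u) * u^(k-1) * (a-u)^k) +
        Real.exp (-(p/2)*u) * u^k * (a-u)^(k-1)) =
        (1+a*p)⁻¹ * (a^(2*k) * FB (k-1) k (a*(p/2))) + a^(2*k) * FB k (k-1) (a*(p/2)) := by
      rw [integral_add (hint4.const_mul _) hint5, integral_const_mul, FB_scale ha0, FB_scale ha0,
        k1, k2]
    have U' := U.trans_eq (congrArg₂ (· * ·) rfl hadd)
    beta_reduce at U'
    rw [integral_const_mul, FB_scale hb0, k1] at U'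
    have i1 : a*(p/2) = a*p/2 := by ring
    have i2 : b*(q/2) = b*q/2 := by ring
    rw [i1, i2] at U'
    have f1 := (hF1 (a*p/2) (by positivity)).trans
      (mul_le_mul_of_nonneg_left (half_rpow hap (show 0 ≤ k+1 by linarith)) hD1.le)
    have f2 := (hF1 (b*q/2) (by positivity)).trans
      (mul_le_mul_of_nonneg_left (half_rpow hbq (show 0 ≤ k+1 by linarith)) hD1.le)
    have f3 := hF2 (a*p/2) (by positivity)
    rw [k3] at f3
    have f3 := f3.trans
      (mul_le_mul_of_nonneg_left (half_rpow hap hk.le) hD2.le)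
    rw [← hP] at f1
    rw [← hQ] at f2
    have f5 : P = (1+a*p)⁻¹ * (1+a*p)^(-k) := by
      rw [hP, ← Real.rpow_neg_one, ← Real.rpow_add (by positivity)]; congr 1; ring
    have fpos : 0 ≤ (1+a*p)⁻¹ * (a^(2*k) * FB (k-1) k (a*p/2)) + a^(2*k) * FB k (k-1) (a*p/2) := by
      have n1 : ∀ A B y : ℝ, 0 ≤ FB A B y := fun A B y =>
        setIntegral_nonneg measurableSet_Ioo fun t ht => by
          have h1 : 0 < t := ht.1
          have h1t : 0 < 1 - t := by linarith [ht.2]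
          positivity
      have := n1 (k-1) k (a*p/2)
      have := n1 k (k-1) (a*p/2)
      positivity
    have f6 : (1+a*p)⁻¹ * (a^(2*k) * FB (k-1) k (a*p/2)) + a^(2*k) * FB k (k-1) (a*p/2) ≤
        a^(2*k) * ((D2 * 2^k + D1 * 2^(k+1)) * P) := by
      calc _ ≤ (1+a*p)⁻¹ * (a^(2*k) * (D2 * (2^k * (1+a*p)^(-k)))) +
            a^(2*k) * (D1 * (2^(k+1) * P)) := by gcongr
        _ = a^(2*k) * (D2 * 2^k * ((1+a*p)⁻¹ * (1+a*p)^(-k)) + D1 * 2^(k+1) * P) := by ring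
        _ = _ := by rw [← f5]; ring
    have U2 : ∫ w in Set.Ioo 0 b, ∫ u in Set.Ioo 0 a, fullK k l1 l2 l3 x1 x2 x3 (w + l3) (l1 - u) ≤
        C0 * M * (C1 * ((a+b)^k * (a+b)^k * G)) * (b^(2*k) * (D1 * (2^(k+1) * Q))) *
        (a^(2*k) * ((D2 * 2^k + D1 * 2^(k+1)) * P)) := by
      refine U'.trans ?_
      refine mul_le_mul ?_ f6 fpos (by positivity)
      gcongr
    calc _ ≤ N * (a^(2*k) * (a+b)^(2*k) * b^(2*k))⁻¹ *
        (C0 * M * (C1 * ((a+b)^k * (a+b)^k * G)) * (b^(2*k) * (D1 * (2^(k+1) * Q))) *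
        (a^(2*k) * ((D2 * 2^k + D1 * 2^(k+1)) * P))) := by gcongr
      _ = _ := by rw [hdd (a+b) (by positivity)]; field_simp

/-- Theorem 4.1: sharp estimate of the `A₂` Dunkl kernel. -/
theorem estimate_C231_case1 (k : ℝ) (hk : 0 < k) :
    ∃ C : ℝ, 0 < C ∧ ∀ l1 l2 l3 x1 x2 x3 : ℝ,
      l1 + l2 + l3 = 0 →
      l2 < l1 →
      l3 < l2 →
      x1 + x2 + x3 = 0 →
      x3 ≤ x2 →
      x1 ≤ x3 →
      l1 - l2 ≤ l2 - l3 →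
      (C⁻¹ * (Real.exp (l1 * x2 + l2 * x3 + l3 * x1) /
          ((1 + (l1 - l2) * (x2 - x3)) ^ (k + 1) * (1 + (l2 - l3) * (x3 - x1)) ^ (k + 1)
            * (1 + (l1 - l3) * (x2 - x1)) ^ k))
        ≤ EkA2 k x1 x2 x3 l1 l2 l3 ∧
      EkA2 k x1 x2 x3 l1 l2 l3
        ≤ C * (Real.exp (l1 * x2 + l2 * x3 + l3 * x1) /
          ((1 + (l1 - l2) * (x2 - x3)) ^ (k + 1) * (1 + (l2 - l3) * (x3 - x1)) ^ (k + 1)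
            * (1 + (l1 - l3) * (x2 - x1)) ^ k))) := by
  obtain ⟨c, C, hc, hC, h⟩ := main_bounds k hk
  refine ⟨max c⁻¹ C, lt_max_of_lt_right hC, ?_⟩
  intro l1 l2 l3 x1 x2 x3 hl h12 h23 hx hx1 hx2 hab
  obtain ⟨hL, hU⟩ := h l1 l2 l3 x1 x2 x3 _ _ _ _ rfl rfl rfl rfl hl (by linarith) (by linarith)
    (by linarith) hab
  have hp : 0 ≤ x2 - x3 := by linarith
  have hq : 0 ≤ x3 - x1 := by linarith
  have ha : 0 ≤ l1 - l2 := by linarith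
  have hb : 0 ≤ l2 - l3 := by linarith
  have e1 : l1 - l2 + (l2 - l3) = l1 - l3 := by ring
  have e2 : x2 - x3 + (x3 - x1) = x2 - x1 := by ring
  have hg : 0 ≤ (l1 - l3) * (x2 - x1) := mul_nonneg (by linarith) (by linarith)
  rw [e1, e2] at hL hU
  rw [target_eq k _ _ _ _ (mul_nonneg ha hp) (mul_nonneg hb hq) hg]
  have hpos : 0 ≤ Real.exp (l1 * x2 + l2 * x3 + l3 * x1) *
      ((1 + (l1 - l2) * (x2 - x3)) ^ (-(k + 1)) * (1 + (l2 - l3) * (x3 - x1)) ^ (-(k + 1)) *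
      (1 + (l1 - l3) * (x2 - x1)) ^ (-k)) := by positivity
  refine ⟨le_trans (mul_le_mul_of_nonneg_right ?_ hpos) hL,
    hU.trans (mul_le_mul_of_nonneg_right (le_max_right _ _) hpos)⟩
  exact inv_le_of_inv_le₀ hc (le_max_left _ _)
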